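/- arXiv:2310.00376 — 2 statements merged into one kernel-verified Lean document; each statement's English description precedes it below -/
import Mathlib

section
/- (Energy inequality for the linear-convergence analysis, Lemma 3.6.) Assume the IADMM setting with P_k = 0 for all k, and suppose λ_max(Q) > 0. Let (x*,λ*) = ((y*,z*),λ*) be a KKT solution of problem (P). Then for every k ≥ 2: β_k(L(x^{k+1},λ*) − L(x*,λ*)) + ((2−γ)β_k²/2)‖𝒜x^{k+1}−b‖² + (β_k² + σ_gβ_k/λ_max(Q))‖z^{k+1}−z^k‖²_Q + (β_{k+1}²/2 + εσ_gβ_k/(4λ_max(CᵀC+Q)))‖z*−z^{k+1}‖²_{CᵀC+Q} + (1/(2γ))‖λ*−λ^{k+1}‖² ≤ ((2−γ−δ/γ)β_{k−1}²/2)‖𝒜x^k−b‖² + (β_{k−1}²/2)‖z^k−z^{k−1}‖²_Q + (β_k²/2)‖z*−z^k‖²_{CᵀC+Q} + (1/(2γ))‖λ*−λ^k‖² − (εσ_gβ_k/4)‖z*−z^{k+1}‖². -/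
/-!
Write `r_j = B y^j + C z^j - b`, `d = z^{k+1} - z^k`, `e = z* - z^{k+1}` and `M = CᵀC + Q`. Adding the
subgradient inequalities of `f` and `g` at the `(k+1)`-st iterate, tested against the KKT point, and
using the multiplier update gives a one-step estimate (`energy_step`) whose only bad term is the cross
term `β_k² ⟪C d, r_{k+1}⟫`. This term is controlled by the strong monotonicity of `∂g` between `z^k`
and `z^{k+1}` (`cross_term`): together with Young's inequality this produces the terms at level
`k - 1` with factor `(γ-1)²`, and `(γ-1)² ≤ (γ-1)/γ = 2 - γ - δ/γ`, where `δ = 1 + γ - γ²`,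
because `γ² ≤ γ + 1`.
Strong convexity supplies the surplus `σ_g β_k (‖e‖²/2 + ‖d‖²)`; the Rayleigh bounds
`‖w‖²_A ≤ λ_max(A) ‖w‖²` (`quadForm_le_lamMax`) for `A = M, Q`, with the upper bound on `β_{k+1}`,
convert it into the weighted terms of the energy.
-/

open Matrix Filter

/-- Euclidean norm of a vector in `ℝ^n`. -/
noncomputable def vnorm {n : ℕ} (w : Fin n → ℝ) : ℝ := Real.sqrt (w ⬝ᵥ w)

/-- `ξ` is a subgradient of the convex function `h` at `u`. -/
def IsSubgradient {p : ℕ} (h : (Fin p → ℝ) → ℝ) (ξ u : Fin p → ℝ) : Prop :=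
  ∀ w, h w ≥ h u + ξ ⬝ᵥ (w - u)

/-- The largest eigenvalue of a symmetric matrix, as the supremum of the
Rayleigh quotient over unit vectors. -/
noncomputable def lamMax {n : ℕ} (A : Matrix (Fin n) (Fin n) ℝ) : ℝ :=
  sSup { r | ∃ w : Fin n → ℝ, w ⬝ᵥ w = 1 ∧ w ⬝ᵥ A *ᵥ w = r }

/-- The defining set of `lamMax A` is bounded above, so `sSup` does dominate each Rayleigh quotient. -/
lemma bddAbove_rayleigh {n : ℕ} (A : Matrix (Fin n) (Fin n) ℝ) :
    BddAbove { r | ∃ w : Fin n → ℝ, w ⬝ᵥ w = 1 ∧ w ⬝ᵥ A *ᵥ w = r } := by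
  refine ⟨∑ i, ∑ j, |A i j|, ?_⟩
  rintro r ⟨w, hw, rfl⟩
  have hw1 : ∀ i, |w i| ≤ 1 := by
    intro i
    have h1 : w i * w i ≤ w ⬝ᵥ w :=
      Finset.single_le_sum (f := fun i => w i * w i) (fun i _ => mul_self_nonneg (w i))
        (Finset.mem_univ i)
    rw [hw] at h1
    exact abs_le_one_iff_mul_self_le_one.2 h1
  simp only [dotProduct, mulVec, Finset.mul_sum]
  refine Finset.sum_le_sum fun i _ => Finset.sum_le_sum fun j _ => ?_
  calc w i * (A i j * w j) ≤ |w i * (A i j * w j)| := le_abs_self _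
    _ = |w i| * |w j| * |A i j| := by rw [abs_mul, abs_mul]; ring
    _ ≤ 1 * |A i j| := by
        gcongr
        exact mul_le_one₀ (hw1 i) (abs_nonneg _) (hw1 j)
    _ = |A i j| := one_mul _

lemma dotProduct_self_nonneg_real {n : ℕ} (w : Fin n → ℝ) : 0 ≤ w ⬝ᵥ w :=
  Finset.sum_nonneg fun i _ => mul_self_nonneg (w i)

lemma quadForm_le_lamMax {n : ℕ} (A : Matrix (Fin n) (Fin n) ℝ) (w : Fin n → ℝ) :
    w ⬝ᵥ A *ᵥ w ≤ lamMax A * (w ⬝ᵥ w) := by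
  rcases (dotProduct_self_nonneg_real w).eq_or_lt with h | h
  · have : w = 0 := dotProduct_self_eq_zero.1 h.symm
    simp [this]
  · set s := Real.sqrt (w ⬝ᵥ w) with hs
    have hs0 : 0 < s := Real.sqrt_pos.2 h
    have hss : w ⬝ᵥ w = s ^ 2 := (Real.sq_sqrt h.le).symm
    have := le_csSup (bddAbove_rayleigh A) ⟨s⁻¹ • w, by
      simp only [smul_dotProduct, dotProduct_smul, smul_eq_mul, hss]
      field_simp, rfl⟩
    change _ ≤ lamMax A at this
    simp only [mulVec_smul, smul_dotProduct, dotProduct_smul, smul_eq_mul] at this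
    rw [hss]
    calc w ⬝ᵥ A *ᵥ w = s⁻¹ * (s⁻¹ * (w ⬝ᵥ A *ᵥ w)) * s ^ 2 := by field_simp
      _ ≤ _ := by gcongr

lemma transpose_mulVec_dotProduct {m n : ℕ} (C : Matrix (Fin m) (Fin n) ℝ) (u : Fin m → ℝ)
    (v : Fin n → ℝ) : (Cᵀ *ᵥ u) ⬝ᵥ v = u ⬝ᵥ C *ᵥ v := by
  rw [mulVec_transpose, dotProduct_mulVec]

lemma quadForm_gram_add {m n : ℕ} (C : Matrix (Fin m) (Fin n) ℝ) (Q : Matrix (Fin n) (Fin n) ℝ)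
    (v : Fin n → ℝ) :
    v ⬝ᵥ (Cᵀ * C + Q) *ᵥ v = (C *ᵥ v) ⬝ᵥ (C *ᵥ v) + v ⬝ᵥ Q *ᵥ v := by
  rw [add_mulVec, dotProduct_add, ← mulVec_mulVec, dotProduct_comm v, transpose_mulVec_dotProduct]

lemma posSemidef_dotProduct_comm {n : ℕ} {Q : Matrix (Fin n) (Fin n) ℝ} (hQ : Q.PosSemidef)
    (u v : Fin n → ℝ) : u ⬝ᵥ Q *ᵥ v = v ⬝ᵥ Q *ᵥ u := by
  have h : Qᵀ = Q := by simpa [Matrix.IsHermitian] using hQ.1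
  rw [dotProduct_comm v, ← transpose_mulVec_dotProduct, h]

lemma posSemidef_quadForm_nonneg {n : ℕ} {Q : Matrix (Fin n) (Fin n) ℝ} (hQ : Q.PosSemidef)
    (v : Fin n → ℝ) : 0 ≤ v ⬝ᵥ Q *ᵥ v := by
  simpa using hQ.dotProduct_mulVec_nonneg v

/-- One-step estimate: the subgradient inequalities at the new iterate `(y₁, z₁)` tested against the
KKT point, with the multiplier difference expanded by `l₁ = l₀ + γ β r`. -/
lemma energy_step {m n₁ n₂ : ℕ}
    {B : Matrix (Fin m) (Fin n₁) ℝ} {C : Matrix (Fin m) (Fin n₂) ℝ} {b : Fin m → ℝ}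
    {f : (Fin n₁ → ℝ) → ℝ} {g : (Fin n₂ → ℝ) → ℝ} {γ σ β : ℝ} (hγ : 0 < γ) (hβ : 0 < β)
    {Q : Matrix (Fin n₂) (Fin n₂) ℝ} (hQ : Q.PosSemidef)
    {y₁ ys : Fin n₁ → ℝ} {z₀ z₁ zs : Fin n₂ → ℝ} {l₀ l₁ ls : Fin m → ℝ}
    (h₁ : f ys ≥ f y₁ + -(Bᵀ *ᵥ l₀ + β • (Bᵀ *ᵥ (B *ᵥ y₁ + C *ᵥ z₀ - b))) ⬝ᵥ (ys - y₁))
    (h₂ : g zs ≥ g z₁ + -(Cᵀ *ᵥ l₀ + β • (Cᵀ *ᵥ (B *ᵥ y₁ + C *ᵥ z₁ - b))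
            + β • (Q *ᵥ (z₁ - z₀))) ⬝ᵥ (zs - z₁) + σ / 2 * ((zs - z₁) ⬝ᵥ (zs - z₁)))
    (h₃ : l₁ = l₀ + (γ * β) • (B *ᵥ y₁ + C *ᵥ z₁ - b))
    (hs : B *ᵥ ys + C *ᵥ zs = b) :
    β * ((f y₁ + g z₁ + ls ⬝ᵥ (B *ᵥ y₁ + C *ᵥ z₁ - b)) - (f ys + g zs))
        + (2 - γ) * β ^ 2 / 2 * ((B *ᵥ y₁ + C *ᵥ z₁ - b) ⬝ᵥ (B *ᵥ y₁ + C *ᵥ z₁ - b))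
        + β ^ 2 / 2 * ((z₁ - z₀) ⬝ᵥ (Cᵀ * C + Q) *ᵥ (z₁ - z₀))
        + β ^ 2 / 2 * ((zs - z₁) ⬝ᵥ (Cᵀ * C + Q) *ᵥ (zs - z₁))
        + σ * β / 2 * ((zs - z₁) ⬝ᵥ (zs - z₁))
        + 1 / (2 * γ) * ((ls - l₁) ⬝ᵥ (ls - l₁))
      ≤ β ^ 2 / 2 * ((zs - z₀) ⬝ᵥ (Cᵀ * C + Q) *ᵥ (zs - z₀))
        + 1 / (2 * γ) * ((ls - l₀) ⬝ᵥ (ls - l₀))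
        + β ^ 2 * ((C *ᵥ (z₁ - z₀)) ⬝ᵥ (B *ᵥ y₁ + C *ᵥ z₁ - b)) := by
  set r := B *ᵥ y₁ + C *ᵥ z₁ - b with hr
  obtain ⟨d, hd⟩ : ∃ d, d = z₁ - z₀ := ⟨_, rfl⟩
  obtain ⟨e, he⟩ : ∃ e, e = zs - z₁ := ⟨_, rfl⟩
  obtain ⟨v, hv⟩ : ∃ v, v = ls - l₀ := ⟨_, rfl⟩
  have e₀ : zs - z₀ = e + d := by rw [hd, he]; abel
  have e₁ : B *ᵥ y₁ + C *ᵥ z₀ - b = r - C *ᵥ d := by rw [hr, hd, mulVec_sub]; abel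
  have e₂ : B *ᵥ (ys - y₁) = -(r + C *ᵥ e) := by
    rw [hr, he, mulVec_sub, mulVec_sub, ← hs]; abel
  have e₃ : ls - l₁ = v - (γ * β) • r := by rw [h₃, hv]; abel
  have e₄ : ls = v + l₀ := by rw [hv]; abel
  rw [neg_dotProduct, add_dotProduct, smul_dotProduct, transpose_mulVec_dotProduct,
    transpose_mulVec_dotProduct, e₁, e₂] at h₁
  rw [neg_dotProduct, add_dotProduct, add_dotProduct, smul_dotProduct, smul_dotProduct,
    transpose_mulVec_dotProduct, transpose_mulVec_dotProduct, ← hd, ← he] at h₂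
  rw [e₃, e₀, ← hd, ← he, ← hv, quadForm_gram_add, quadForm_gram_add, quadForm_gram_add]
  have hQc : e ⬝ᵥ Q *ᵥ d = (Q *ᵥ d) ⬝ᵥ e := dotProduct_comm _ _
  have hQc' : d ⬝ᵥ Q *ᵥ e = (Q *ᵥ d) ⬝ᵥ e := by rw [posSemidef_dotProduct_comm hQ, hQc]
  have hCc : (C *ᵥ e) ⬝ᵥ (C *ᵥ d) = (C *ᵥ d) ⬝ᵥ (C *ᵥ e) := dotProduct_comm _ _
  have hrv : r ⬝ᵥ v = v ⬝ᵥ r := dotProduct_comm _ _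
  have hl : ls ⬝ᵥ r = v ⬝ᵥ r + l₀ ⬝ᵥ r := by rw [e₄, add_dotProduct]
  rw [hl]
  simp only [mulVec_add, add_dotProduct, dotProduct_add, sub_dotProduct, dotProduct_sub,
    smul_dotProduct, dotProduct_smul, dotProduct_neg, smul_eq_mul, hQc, hQc', hCc, hrv]
    at h₁ h₂ ⊢
  have hm := mul_le_mul_of_nonneg_left (add_le_add h₁ h₂) hβ.le
  have hg : 1 / (2 * γ) * (v ⬝ᵥ v - γ * β * v ⬝ᵥ r - γ * β * (v ⬝ᵥ r - γ * β * r ⬝ᵥ r))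
      = 1 / (2 * γ) * (v ⬝ᵥ v) - β * (v ⬝ᵥ r) + γ * β ^ 2 / 2 * (r ⬝ᵥ r) := by
    field_simp; ring
  linarith

/-- Bound on the cross term from strong monotonicity of `∂g` between two consecutive iterates, with
subgradients `-(Cᵀ lo + …)` at `z₀` and `-(Cᵀ l₀ + …)` at `z₁`, followed by Young's inequality. -/
lemma cross_term {m n : ℕ} {C : Matrix (Fin m) (Fin n) ℝ} {Q : Matrix (Fin n) (Fin n) ℝ}
    (hQ : Q.PosSemidef) {g : (Fin n → ℝ) → ℝ} {γ σ β β' : ℝ} (hβ : 0 < β)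
    {r r₀ lo l₀ : Fin m → ℝ} {z₀ z₁ d₀ : Fin n → ℝ}
    (h₁ : g z₀ ≥ g z₁ + -(Cᵀ *ᵥ l₀ + β • (Cᵀ *ᵥ r) + β • (Q *ᵥ (z₁ - z₀))) ⬝ᵥ (z₀ - z₁)
            + σ / 2 * ((z₀ - z₁) ⬝ᵥ (z₀ - z₁)))
    (h₀ : g z₁ ≥ g z₀ + -(Cᵀ *ᵥ lo + β' • (Cᵀ *ᵥ r₀) + β' • (Q *ᵥ d₀)) ⬝ᵥ (z₁ - z₀)
            + σ / 2 * ((z₁ - z₀) ⬝ᵥ (z₁ - z₀)))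
    (hl : l₀ = lo + (γ * β') • r₀) :
    β ^ 2 * ((C *ᵥ (z₁ - z₀)) ⬝ᵥ r)
        + β ^ 2 / 2 * ((z₁ - z₀) ⬝ᵥ Q *ᵥ (z₁ - z₀)) + σ * β * ((z₁ - z₀) ⬝ᵥ (z₁ - z₀))
      ≤ β ^ 2 / 2 * ((C *ᵥ (z₁ - z₀)) ⬝ᵥ (C *ᵥ (z₁ - z₀)))
        + (γ - 1) ^ 2 * β' ^ 2 / 2 * (r₀ ⬝ᵥ r₀) + β' ^ 2 / 2 * (d₀ ⬝ᵥ Q *ᵥ d₀) := by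
  rw [← neg_sub z₁ z₀] at h₁
  obtain ⟨d, hd⟩ : ∃ d, d = z₁ - z₀ := ⟨_, rfl⟩
  rw [← hd] at h₁ h₀ ⊢
  simp only [hl, neg_dotProduct, dotProduct_neg, neg_neg, add_dotProduct, smul_dotProduct,
    transpose_mulVec_dotProduct, smul_eq_mul] at h₁ h₀
  have hC := dotProduct_self_nonneg_real (β • (C *ᵥ d) + ((γ - 1) * β') • r₀)
  have hQn := posSemidef_quadForm_nonneg hQ (β • d - β' • d₀)
  have c₁ : (Q *ᵥ d) ⬝ᵥ d = d ⬝ᵥ Q *ᵥ d := dotProduct_comm _ _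
  have c₂ : (Q *ᵥ d₀) ⬝ᵥ d = d ⬝ᵥ Q *ᵥ d₀ := dotProduct_comm _ _
  have c₃ : d₀ ⬝ᵥ Q *ᵥ d = d ⬝ᵥ Q *ᵥ d₀ := posSemidef_dotProduct_comm hQ _ _
  have c₄ : r ⬝ᵥ (C *ᵥ d) = (C *ᵥ d) ⬝ᵥ r := dotProduct_comm _ _
  have c₅ : r₀ ⬝ᵥ (C *ᵥ d) = (C *ᵥ d) ⬝ᵥ r₀ := dotProduct_comm _ _
  simp only [add_dotProduct, dotProduct_add, sub_dotProduct, dotProduct_sub, mulVec_sub,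
    mulVec_smul, smul_dotProduct, dotProduct_smul, smul_eq_mul, c₁, c₂, c₃, c₄, c₅]
    at h₁ h₀ hC hQn ⊢
  have hm := mul_le_mul_of_nonneg_left (add_le_add h₁ h₀) hβ.le
  linarith

/-- Lemma 3.6 (energy inequality for the linear-convergence analysis of IADMM
with `P_k = 0`). -/
theorem iadmm_energy_inequality
    {m n₁ n₂ : ℕ}
    (B : Matrix (Fin m) (Fin n₁) ℝ) (C : Matrix (Fin m) (Fin n₂) ℝ) (b : Fin m → ℝ)
    (f : (Fin n₁ → ℝ) → ℝ) (g : (Fin n₂ → ℝ) → ℝ)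
    (γ ε βlow τ σg : ℝ)
    (hγ : 1 < γ ∧ γ < (1 + Real.sqrt 5) / 2)
    (hε : 0 < ε ∧ ε < 1) (hβlow : 0 < βlow ∧ βlow < 1) (hτ : 0 < τ ∧ τ < 1)
    (hσg : 0 < σg)
    (hf : ConvexOn ℝ Set.univ f) (hgconv : ConvexOn ℝ Set.univ g)
    (hgstr : ∀ u ξ, IsSubgradient g ξ u → ∀ w,
        g w ≥ g u + ξ ⬝ᵥ (w - u) + σg / 2 * ((w - u) ⬝ᵥ (w - u)))
    (Q : Matrix (Fin n₂) (Fin n₂) ℝ) (hQ : Q.PosSemidef)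
    (hlamQ : 0 < lamMax (Cᵀ * C + Q))
    (hlamQpos : 0 < lamMax Q)
    (β : ℕ → ℝ) (hβpos : ∀ k, 1 ≤ k → 0 < β k) (hβ1 : βlow ≤ β 1)
    (hβlo : ∀ k, 1 ≤ k → max βlow (τ * β k) ≤ β (k + 1))
    (hβhi : ∀ k, 1 ≤ k →
      β (k + 1) ≤ Real.sqrt (β k ^ 2 + (1 - ε) * σg * β k / lamMax (Cᵀ * C + Q)))
    (y : ℕ → Fin n₁ → ℝ) (z : ℕ → Fin n₂ → ℝ) (lam : ℕ → Fin m → ℝ)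
    -- iterate conditions with `P_k = 0`
    (hiter₁ : ∀ k, 1 ≤ k → IsSubgradient f
        (-(Bᵀ *ᵥ lam k + β k • (Bᵀ *ᵥ (B *ᵥ y (k + 1) + C *ᵥ z k - b)))) (y (k + 1)))
    (hiter₂ : ∀ k, 1 ≤ k → IsSubgradient g
        (-(Cᵀ *ᵥ lam k + β k • (Cᵀ *ᵥ (B *ᵥ y (k + 1) + C *ᵥ z (k + 1) - b))
            + β k • (Q *ᵥ (z (k + 1) - z k)))) (z (k + 1)))
    (hiter₃ : ∀ k, 1 ≤ k →
      lam (k + 1) = lam k + (γ * β k) • (B *ᵥ y (k + 1) + C *ᵥ z (k + 1) - b))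
    -- a KKT solution
    (ystar : Fin n₁ → ℝ) (zstar : Fin n₂ → ℝ) (lamstar : Fin m → ℝ)
    (hKKT₁ : IsSubgradient f (-(Bᵀ *ᵥ lamstar)) ystar)
    (hKKT₂ : IsSubgradient g (-(Cᵀ *ᵥ lamstar)) zstar)
    (hKKT₃ : B *ᵥ ystar + C *ᵥ zstar = b) :
    ∀ k, 2 ≤ k →
      β k * ((f (y (k + 1)) + g (z (k + 1))
                + lamstar ⬝ᵥ (B *ᵥ y (k + 1) + C *ᵥ z (k + 1) - b))
              - (f ystar + g zstar + lamstar ⬝ᵥ (B *ᵥ ystar + C *ᵥ zstar - b)))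
        + (2 - γ) * β k ^ 2 / 2 *
            ((B *ᵥ y (k + 1) + C *ᵥ z (k + 1) - b) ⬝ᵥ (B *ᵥ y (k + 1) + C *ᵥ z (k + 1) - b))
        + (β k ^ 2 + σg * β k / lamMax Q) *
            ((z (k + 1) - z k) ⬝ᵥ Q *ᵥ (z (k + 1) - z k))
        + (β (k + 1) ^ 2 / 2 + ε * σg * β k / (4 * lamMax (Cᵀ * C + Q))) *
            ((zstar - z (k + 1)) ⬝ᵥ (Cᵀ * C + Q) *ᵥ (zstar - z (k + 1)))
        + 1 / (2 * γ) * ((lamstar - lam (k + 1)) ⬝ᵥ (lamstar - lam (k + 1)))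
      ≤ (2 - γ - (1 + γ - γ ^ 2) / γ) * β (k - 1) ^ 2 / 2 *
            ((B *ᵥ y k + C *ᵥ z k - b) ⬝ᵥ (B *ᵥ y k + C *ᵥ z k - b))
        + β (k - 1) ^ 2 / 2 * ((z k - z (k - 1)) ⬝ᵥ Q *ᵥ (z k - z (k - 1)))
        + β k ^ 2 / 2 * ((zstar - z k) ⬝ᵥ (Cᵀ * C + Q) *ᵥ (zstar - z k))
        + 1 / (2 * γ) * ((lamstar - lam k) ⬝ᵥ (lamstar - lam k))
        - ε * σg * β k / 4 * ((zstar - z (k + 1)) ⬝ᵥ (zstar - z (k + 1))) := by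
  intro k hk
  obtain ⟨j, rfl⟩ : ∃ j, k = j + 1 := ⟨k - 1, by omega⟩
  have hj : 1 ≤ j := by omega
  have hk1 : 1 ≤ j + 1 := by omega
  rw [Nat.add_sub_cancel]
  have hβ := hβpos _ hk1
  have hγ0 : 0 < γ := by linarith [hγ.1]
  have step := energy_step (ls := lamstar) hγ0 hβ hQ (hiter₁ _ hk1 ystar)
    (hgstr _ _ (hiter₂ _ hk1) zstar) (hiter₃ _ hk1) hKKT₃
  have cross := cross_term hQ hβ (hgstr _ _ (hiter₂ _ hk1) (z (j + 1)))
    (hgstr _ _ (hiter₂ _ hj) (z (j + 1 + 1))) (hiter₃ _ hj)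
  have hres : B *ᵥ ystar + C *ᵥ zstar - b = 0 := by rw [hKKT₃, sub_self]
  rw [hres, dotProduct_zero, add_zero]
  have hrQ := quadForm_le_lamMax Q (z (j + 1 + 1) - z (j + 1))
  have hrM := quadForm_le_lamMax (Cᵀ * C + Q) (zstar - z (j + 1 + 1))
  have hM0 : 0 ≤ (zstar - z (j + 1 + 1)) ⬝ᵥ (Cᵀ * C + Q) *ᵥ (zstar - z (j + 1 + 1)) := by
    rw [quadForm_gram_add]
    exact add_nonneg (dotProduct_self_nonneg_real _) (posSemidef_quadForm_nonneg hQ _)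
  rw [quadForm_gram_add C Q (z (j + 1 + 1) - z (j + 1))] at step
  have hr0 := dotProduct_self_nonneg_real (B *ᵥ y (j + 1) + C *ᵥ z (j + 1) - b)
  -- `γ` lies below the golden ratio, the positive root of `t² = t + 1`
  have hγ2 : γ ^ 2 ≤ γ + 1 := by
    have h5 : Real.sqrt 5 ^ 2 = 5 := Real.sq_sqrt (by norm_num)
    nlinarith [hγ.1, hγ.2, Real.sqrt_nonneg 5]
  have hγc : (γ - 1) ^ 2 ≤ 2 - γ - (1 + γ - γ ^ 2) / γ := by
    have : 2 - γ - (1 + γ - γ ^ 2) / γ = (γ - 1) / γ := by field_simp; ring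
    rw [this, le_div_iff₀ hγ0]
    nlinarith [mul_nonneg (sub_nonneg.2 hγ.1.le) (sub_nonneg.2 hγ2)]
  have tr : (γ - 1) ^ 2 * β j ^ 2 / 2 *
        ((B *ᵥ y (j + 1) + C *ᵥ z (j + 1) - b) ⬝ᵥ (B *ᵥ y (j + 1) + C *ᵥ z (j + 1) - b))
      ≤ (2 - γ - (1 + γ - γ ^ 2) / γ) * β j ^ 2 / 2 *
        ((B *ᵥ y (j + 1) + C *ᵥ z (j + 1) - b) ⬝ᵥ (B *ᵥ y (j + 1) + C *ᵥ z (j + 1) - b)) := by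
    gcongr
  have tQ : σg * β (j + 1) / lamMax Q *
        ((z (j + 1 + 1) - z (j + 1)) ⬝ᵥ Q *ᵥ (z (j + 1 + 1) - z (j + 1)))
      ≤ σg * β (j + 1) * ((z (j + 1 + 1) - z (j + 1)) ⬝ᵥ (z (j + 1 + 1) - z (j + 1))) := by
    rw [div_mul_eq_mul_div, div_le_iff₀ hlamQpos, mul_assoc, mul_assoc (σg * β (j + 1))]
    rw [← mul_assoc]
    exact mul_le_mul_of_nonneg_left (hrQ.trans_eq (mul_comm _ _)) (by positivity)
  have hβn := hβpos (j + 1 + 1) (by omega)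
  have hβsq : β (j + 1 + 1) ^ 2
      ≤ β (j + 1) ^ 2 + (1 - ε) * σg * β (j + 1) / lamMax (Cᵀ * C + Q) := by
    have h1ε : 0 ≤ 1 - ε := by linarith [hε.2]
    exact (Real.le_sqrt hβn.le (by positivity)).1 (hβhi _ hk1)
  have hε0 := hε.1
  -- the surplus `σ β ‖e‖² / 2` splits in the proportions `(1 - ε) / 2 + ε / 4 + ε / 4`
  have tM : (β (j + 1 + 1) ^ 2 / 2 + ε * σg * β (j + 1) / (4 * lamMax (Cᵀ * C + Q))) *
        ((zstar - z (j + 1 + 1)) ⬝ᵥ (Cᵀ * C + Q) *ᵥ (zstar - z (j + 1 + 1)))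
      ≤ β (j + 1) ^ 2 / 2 *
          ((zstar - z (j + 1 + 1)) ⬝ᵥ (Cᵀ * C + Q) *ᵥ (zstar - z (j + 1 + 1)))
        + (σg * β (j + 1) / 2 - ε * σg * β (j + 1) / 4) *
          ((zstar - z (j + 1 + 1)) ⬝ᵥ (zstar - z (j + 1 + 1))) := by
    generalize (zstar - z (j + 1 + 1)) ⬝ᵥ (Cᵀ * C + Q) *ᵥ (zstar - z (j + 1 + 1)) = E at *
    generalize (zstar - z (j + 1 + 1)) ⬝ᵥ (zstar - z (j + 1 + 1)) = N at *
    generalize lamMax (Cᵀ * C + Q) = Λ at *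
    have hE : E / Λ ≤ N := by rw [div_le_iff₀ hlamQ]; linarith
    have hc : 0 ≤ σg * β (j + 1) / 2 - ε * σg * β (j + 1) / 4 := by
      have : 0 ≤ σg * β (j + 1) * (2 - ε) := mul_nonneg (by positivity) (by linarith [hε.2])
      linarith
    calc _ ≤ ((β (j + 1) ^ 2 + (1 - ε) * σg * β (j + 1) / Λ) / 2
            + ε * σg * β (j + 1) / (4 * Λ)) * E := by gcongr
      _ = β (j + 1) ^ 2 / 2 * E + (σg * β (j + 1) / 2 - ε * σg * β (j + 1) / 4) * (E / Λ) := by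
        field_simp; ring
      _ ≤ _ := by gcongr
  rw [add_mul (β (j + 1) ^ 2)]
  linarith
end

section
/- (Cross-term bound from the proof of Lemma 3.1.) Assume the IADMM setting. Then for every k ≥ 2: β_k⟨𝒜x^{k+1} − b, C(z^{k+1}−z^k)⟩ ≤ ((γ−1)β_{k−1}²/(2γβ_k))‖𝒜x^k − b‖² + ((1−δ)β_k/2)‖C(z^{k+1}−z^k)‖² + (β_{k−1}²/(2β_k))‖z^k−z^{k−1}‖²_Q − (β_k/2)‖z^{k+1}−z^k‖²_Q − σ_g‖z^k−z^{k+1}‖². -/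
/-!
The proof uses the optimality conditions of two consecutive `z`-steps. Each supplies a subgradient
of `g`, at `z (k + 1)` and at `z k`, and strong convexity makes these strongly monotone
(`subgradient_strongly_monotone`). Substituting the multiplier update for `lam k - lam (k - 1)`
turns the monotonicity inequality into an upper bound for the cross term, in which only two
indefinite products are left: one between the previous residual and `C (z (k + 1) - z k)`, and one
between consecutive `z`-differences in the `Q`-form. Young's inequality (`young_posSemidef`), with
parameter `a = γ β k` for the former and `a = β k` for the latter, bounds both. Scaling the first
bound by `γ - 1` produces the coefficient `γ (γ - 1) = 1 - δ`.
-/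

open Matrix Filter

/-- Adding the strong convexity inequalities at `u` and at `v` gives strong monotonicity of the
subdifferential, with the full constant `σ` because each inequality contributes `σ / 2`. -/
lemma subgradient_strongly_monotone {p : ℕ} {g : (Fin p → ℝ) → ℝ} {σ : ℝ}
    (hg : ∀ u ξ, IsSubgradient g ξ u → ∀ w,
        g w ≥ g u + ξ ⬝ᵥ (w - u) + σ / 2 * ((w - u) ⬝ᵥ (w - u)))
    {u v ξ η : Fin p → ℝ} (hξ : IsSubgradient g ξ u) (hη : IsSubgradient g η v) :
    σ * ((u - v) ⬝ᵥ (u - v)) ≤ ξ ⬝ᵥ (u - v) - η ⬝ᵥ (u - v) := by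
  have h1 := hg u ξ hξ v
  have h2 := hg v η hη u
  rw [← neg_sub u v, dotProduct_neg, neg_dotProduct_neg] at h1
  linarith

/-- Weighted Young inequality in the semi-inner product of `Q`: expand `‖p v - a w‖²_Q ≥ 0` and
divide by `2 a`. -/
lemma young_posSemidef {n : ℕ} {Q : Matrix (Fin n) (Fin n) ℝ} (hQ : Q.PosSemidef)
    {p a : ℝ} (ha : 0 < a) (v w : Fin n → ℝ) :
    p * (v ⬝ᵥ Q *ᵥ w) ≤ p ^ 2 / (2 * a) * (v ⬝ᵥ Q *ᵥ v) + a / 2 * (w ⬝ᵥ Q *ᵥ w) := by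
  have hsymm : w ⬝ᵥ Q *ᵥ v = v ⬝ᵥ Q *ᵥ w := by
    have hT : Qᵀ = Q := by simpa using hQ.isHermitian.eq
    rw [dotProduct_mulVec, ← mulVec_transpose, hT, dotProduct_comm]
  have h : 0 ≤ (p • v - a • w) ⬝ᵥ Q *ᵥ (p • v - a • w) := by
    simpa using hQ.dotProduct_mulVec_nonneg (p • v - a • w)
  simp only [mulVec_sub, mulVec_smul, sub_dotProduct, dotProduct_sub, smul_dotProduct,
    dotProduct_smul, smul_eq_mul, hsymm] at h
  have key : p ^ 2 / (2 * a) * (v ⬝ᵥ Q *ᵥ v) + a / 2 * (w ⬝ᵥ Q *ᵥ w) - p * (v ⬝ᵥ Q *ᵥ w)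
      = (p * (p * (v ⬝ᵥ Q *ᵥ v)) - a * (p * (v ⬝ᵥ Q *ᵥ w))
          - (p * (a * (v ⬝ᵥ Q *ᵥ w)) - a * (a * (w ⬝ᵥ Q *ᵥ w)))) / (2 * a) := by
    field_simp
    ring
  have : 0 ≤ p ^ 2 / (2 * a) * (v ⬝ᵥ Q *ᵥ v) + a / 2 * (w ⬝ᵥ Q *ᵥ w)
      - p * (v ⬝ᵥ Q *ᵥ w) := by
    rw [key]
    apply div_nonneg _ (by positivity)
    linarith
  linarith

/-- Cross-term bound from the proof of Lemma 3.1 (with `δ = 1 + γ − γ²`). -/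
theorem iadmm_cross_term_bound
    {m n₁ n₂ : ℕ}
    (B : Matrix (Fin m) (Fin n₁) ℝ) (C : Matrix (Fin m) (Fin n₂) ℝ) (b : Fin m → ℝ)
    (f : (Fin n₁ → ℝ) → ℝ) (g : (Fin n₂ → ℝ) → ℝ)
    (γ ε βlow τ σg : ℝ)
    (hγ : 1 < γ ∧ γ < (1 + Real.sqrt 5) / 2)
    (hε : 0 < ε ∧ ε < 1) (hβlow : 0 < βlow ∧ βlow < 1) (hτ : 0 < τ ∧ τ < 1)
    (hσg : 0 < σg)
    (hf : ConvexOn ℝ Set.univ f) (hgconv : ConvexOn ℝ Set.univ g)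
    (hgstr : ∀ u ξ, IsSubgradient g ξ u → ∀ w,
        g w ≥ g u + ξ ⬝ᵥ (w - u) + σg / 2 * ((w - u) ⬝ᵥ (w - u)))
    (Q : Matrix (Fin n₂) (Fin n₂) ℝ) (hQ : Q.PosSemidef)
    (hlamQ : 0 < lamMax (Cᵀ * C + Q))
    (β : ℕ → ℝ) (hβpos : ∀ k, 1 ≤ k → 0 < β k) (hβ1 : βlow ≤ β 1)
    (P : ℕ → Matrix (Fin n₁) (Fin n₁) ℝ) (hP : ∀ k, 1 ≤ k → (P k).PosSemidef)
    (hPmono : ∀ k, 1 ≤ k → (β k • P k - β (k + 1) • P (k + 1)).PosSemidef)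
    (hβlo : ∀ k, 1 ≤ k → max βlow (τ * β k) ≤ β (k + 1))
    (hβhi : ∀ k, 1 ≤ k →
      β (k + 1) ≤ Real.sqrt (β k ^ 2 + (1 - ε) * σg * β k / lamMax (Cᵀ * C + Q)))
    (y : ℕ → Fin n₁ → ℝ) (z : ℕ → Fin n₂ → ℝ) (lam : ℕ → Fin m → ℝ)
    (hiter₁ : ∀ k, 1 ≤ k → IsSubgradient f
        (-(Bᵀ *ᵥ lam k + β k • (Bᵀ *ᵥ (B *ᵥ y (k + 1) + C *ᵥ z k - b))
            + P k *ᵥ (y (k + 1) - y k))) (y (k + 1)))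
    (hiter₂ : ∀ k, 1 ≤ k → IsSubgradient g
        (-(Cᵀ *ᵥ lam k + β k • (Cᵀ *ᵥ (B *ᵥ y (k + 1) + C *ᵥ z (k + 1) - b))
            + β k • (Q *ᵥ (z (k + 1) - z k)))) (z (k + 1)))
    (hiter₃ : ∀ k, 1 ≤ k →
      lam (k + 1) = lam k + (γ * β k) • (B *ᵥ y (k + 1) + C *ᵥ z (k + 1) - b)) :
    ∀ k, 2 ≤ k →
      β k * ((B *ᵥ y (k + 1) + C *ᵥ z (k + 1) - b) ⬝ᵥ (C *ᵥ (z (k + 1) - z k)))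
      ≤ (γ - 1) * β (k - 1) ^ 2 / (2 * γ * β k) *
            ((B *ᵥ y k + C *ᵥ z k - b) ⬝ᵥ (B *ᵥ y k + C *ᵥ z k - b))
        + (1 - (1 + γ - γ ^ 2)) * β k / 2 *
            ((C *ᵥ (z (k + 1) - z k)) ⬝ᵥ (C *ᵥ (z (k + 1) - z k)))
        + β (k - 1) ^ 2 / (2 * β k) * ((z k - z (k - 1)) ⬝ᵥ Q *ᵥ (z k - z (k - 1)))
        - β k / 2 * ((z (k + 1) - z k) ⬝ᵥ Q *ᵥ (z (k + 1) - z k))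
        - σg * ((z k - z (k + 1)) ⬝ᵥ (z k - z (k + 1))) := by
  intro k hk
  obtain ⟨j, rfl⟩ : ∃ j, k = j + 1 := ⟨k - 1, by omega⟩
  have hj : 1 ≤ j := by omega
  simp only [Nat.add_sub_cancel]
  have ha := hβpos (j + 1) (by omega)
  have hγ0 : 0 < γ := by linarith [hγ.1]
  have hmono := subgradient_strongly_monotone hgstr (hiter₂ (j + 1) (by omega)) (hiter₂ j hj)
  rw [hiter₃ j hj] at hmono
  rw [← neg_sub (z (j + 1 + 1)) (z (j + 1)), neg_dotProduct_neg]
  set d := z (j + 1 + 1) - z (j + 1)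
  set d' := z (j + 1) - z j
  set r := B *ᵥ y (j + 1) + C *ᵥ z (j + 1) - b
  set r' := B *ᵥ y (j + 1 + 1) + C *ᵥ z (j + 1 + 1) - b
  have hC : ∀ v : Fin m → ℝ, (Cᵀ *ᵥ v) ⬝ᵥ d = v ⬝ᵥ (C *ᵥ d) := fun v => by
    rw [mulVec_transpose, ← dotProduct_mulVec]
  have hQd : ∀ v : Fin n₂ → ℝ, (Q *ᵥ v) ⬝ᵥ d = v ⬝ᵥ Q *ᵥ d := fun v => by
    have hT : Qᵀ = Q := by simpa using hQ.isHermitian.eq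
    rw [dotProduct_mulVec, ← mulVec_transpose, hT]
  simp only [mulVec_add, mulVec_smul, neg_dotProduct, add_dotProduct, smul_dotProduct,
    smul_eq_mul, hC, hQd] at hmono
  have hY1 := young_posSemidef hQ (p := β j) ha d' d
  -- The cross term of `r` and `C d` enters with a minus sign, hence Young's inequality at `-r`.
  have hY2 := young_posSemidef (PosSemidef.one (n := Fin m) (R := ℝ)) (p := β j)
    (mul_pos hγ0 ha) (-r) (C *ᵥ d)
  simp only [one_mulVec, neg_dotProduct, dotProduct_neg, neg_neg] at hY2
  have hY3 := mul_le_mul_of_nonneg_left hY2 (sub_nonneg.2 hγ.1.le)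
  have e : (γ - 1) * β j ^ 2 / (2 * γ * β (j + 1)) * (r ⬝ᵥ r)
      = (γ - 1) * (β j ^ 2 / (2 * (γ * β (j + 1))) * (r ⬝ᵥ r)) := by
    ring
  rw [e]
  linarith
end
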